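/- Let v : ℝ → ℝ be 1-periodic, even (v(−x) = v(x) for all x), and Hölder continuous; let α be irrational and θ ∈ ℝ with δ(α,θ) > 0. Then the quasiperiodic Schrödinger operator (H_{v,α,θ}u)(n) = u(n+1) + u(n−1) + v(θ + nα)u(n) on ℓ²(ℤ) does not have SULE. -/

import Mathlib

noncomputable section

open Filter Real

def distToInt (x : ℝ) : ℝ := |x - round x|

def IsDiophantine (α : ℝ) : Prop :=
  ∃ κ τ : ℝ, 0 < κ ∧ 0 < τ ∧ ∀ k : ℤ, k ≠ 0 → τ / |(k : ℝ)| ^ κ ≤ distToInt (k * α)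

def deltaPhase (α θ : ℝ) : ℝ :=
  limsup (fun n : ℤ => -Real.log (distToInt (2 * θ + n * α)) / |(n : ℝ)|) cofinite

def amoPot (lam α θ : ℝ) : ℤ → ℝ := fun n => 2 * lam * Real.cos (2 * Real.pi * (θ + n * α))

def IsEigenfunction (g : ℤ → ℝ) (E : ℝ) (φ : ℤ → ℝ) : Prop :=
  ∀ n : ℤ, φ (n + 1) + φ (n - 1) + g n * φ n = E * φ n

def deltaPot (g : ℤ → ℝ) : ℝ :=
  limsup (fun n : ℤ => -Real.log (⨆ m : ℤ, |g (n - m) - g m|) / |(n : ℝ)|) cofinite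

def matNorm (M : Matrix (Fin 2) (Fin 2) ℝ) : ℝ := ⨆ p : Fin 2 × Fin 2, |M p.1 p.2|

def transfer (g : ℤ → ℝ) (E : ℝ) : ℕ → ℤ → Matrix (Fin 2) (Fin 2) ℝ
  | 0, _ => 1
  | n + 1, k => !![E - g (k + n), -1; 1, 0] * transfer g E n k

def LyapSup (g : ℤ → ℝ) (E : ℝ) : ℝ :=
  limsup (fun n : ℕ => ⨆ k : ℤ, Real.log (matNorm (transfer g E n k)) / n) atTop

def HasSULE (g : ℤ → ℝ) : Prop :=
  ∃ (Φ : HilbertBasis ℕ ℝ (lp (fun _ : ℤ => ℝ) 2)) (ns : ℕ → ℤ) (γ : ℝ),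
    0 < γ ∧
    (∀ s : ℕ, ∃ E : ℝ, IsEigenfunction g E (fun n => Φ s n)) ∧
    ∀ ε : ℝ, 0 < ε → ∃ C : ℝ,
      ∀ (s : ℕ) (n : ℤ),
        |Φ s n| ≤ C * Real.exp (ε * |(ns s : ℝ)|) * Real.exp (-γ * |(n : ℝ) - (ns s : ℝ)|)

open Topology

/-!
Put `x = |k|`. A reflection `n ↦ k - n` that moves the potential by at most `C e^{-cx}` nearly maps
an eigenfunction `φ` to an eigenfunction `ψ` with the same eigenvalue. The Wronskian of `φ` and `ψ`
is then exponentially small, and at the centre `k / 2` of the reflection it factors into an even and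
an odd part, so `φ` is nearly even or nearly odd about `k / 2`. The error grows at most
exponentially with the distance to `k / 2`, hence this survives up to the site `j = k / 2 + ηx` for
some small `η > 0`: every eigenfunction satisfies `|φ j| ≈ |φ (k - j)|`. Under SULE the product
`|φ j| |φ (k - j)|` is at most about `e^{-2γηx}`, so all eigenfunctions are exponentially small at
`j`. By completeness, on the other hand, SULE forces some eigenfunction to be at least `e^{-ε|j|}`
at `j`, for every `ε > 0`.
-/

/-! ### Square-summable functions -/

section Squares

variable {ι κ : Type*}

lemma abs_mul_le_half_sq_add_sq (x y : ℝ) : |x * y| ≤ (x ^ 2 + y ^ 2) / 2 := by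
  have h := two_mul_le_add_sq |x| |y|
  rw [sq_abs, sq_abs] at h
  rw [abs_mul]
  linarith

lemma abs_le_one_of_hasSum_sq {φ : ι → ℝ} (hφ : HasSum (fun n => φ n ^ 2) 1) (n : ι) :
    |φ n| ≤ 1 :=
  (sq_le_one_iff_abs_le_one _).1 (le_hasSum hφ n fun _ _ => sq_nonneg _)

lemma tendsto_cofinite_zero_of_summable_sq {φ : ι → ℝ} (hφ : Summable fun n => φ n ^ 2) :
    Tendsto φ cofinite (𝓝 0) := by
  refine (tendsto_zero_iff_abs_tendsto_zero _).2 ?_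
  simpa only [Function.comp_def, Real.sqrt_sq_eq_abs, Real.sqrt_zero] using
    hφ.tendsto_cofinite_zero.sqrt

lemma one_le_of_abs_mul_le [Nonempty ι] {f : ι → κ → ℝ}
    (hrow : ∀ s, HasSum (fun n => f s n ^ 2) 1) (hcol : ∀ n, HasSum (fun s => f s n ^ 2) 1)
    {j : κ} {B : κ → ℝ} {b : ℝ} (hB : HasSum B b) (hfB : ∀ s n, |f s j * f s n| ≤ B n) :
    1 ≤ b := by
  have hB0 (n : κ) : 0 ≤ B n := (abs_nonneg _).trans (hfB (Classical.arbitrary ι) n)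
  refine hasSum_le_of_sum_le (hcol j) fun T => ?_
  have hT : HasSum (fun n => ∑ s ∈ T, (f s j * f s n) ^ 2) (∑ s ∈ T, f s j ^ 2) :=
    hasSum_sum fun s _ => by simpa only [mul_pow, mul_one] using (hrow s).mul_left (f s j ^ 2)
  have hT_le (n : κ) : ∑ s ∈ T, f s n ^ 2 ≤ 1 := sum_le_hasSum T (fun _ _ => sq_nonneg _) (hcol n)
  refine hasSum_le (fun n => ?_) hT hB
  calc ∑ s ∈ T, (f s j * f s n) ^ 2
      ≤ ∑ s ∈ T, B n * ((f s j ^ 2 + f s n ^ 2) / 2) := by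
        gcongr with s
        rw [← sq_abs, sq]
        exact mul_le_mul (hfB s n) (abs_mul_le_half_sq_add_sq _ _) (abs_nonneg _) (hB0 n)
    _ = B n * ((∑ s ∈ T, f s j ^ 2 + ∑ s ∈ T, f s n ^ 2) / 2) := by
        rw [← Finset.mul_sum, ← Finset.sum_div, Finset.sum_add_distrib]
    _ ≤ B n := mul_le_of_le_one_right (hB0 n) (by linarith [hT_le j, hT_le n])

lemma hasSum_sq_of_orthonormal {v : ι → lp (fun _ : κ => ℝ) 2} (hv : Orthonormal ℝ v) (s : ι) :
    HasSum (fun n => v s n ^ 2) 1 := by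
  have h := lp.hasSum_inner (𝕜 := ℝ) (v s) (v s)
  rw [real_inner_self_eq_norm_sq, hv.1 s, one_pow] at h
  simpa only [real_inner_self_eq_norm_sq, Real.norm_eq_abs, sq_abs] using h

lemma hasSum_sq_apply_of_hilbertBasis (Φ : HilbertBasis ι ℝ (lp (fun _ : κ => ℝ) 2)) (n : κ) :
    HasSum (fun s => Φ s n ^ 2) 1 := by
  classical
  have h := Φ.hasSum_inner_mul_inner (lp.single 2 n (1 : ℝ)) (lp.single 2 n (1 : ℝ))
  simpa [lp.inner_single_left, lp.inner_single_right, sq] using h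

end Squares

lemma hasSum_sq_reflect {φ : ℤ → ℝ} {a : ℝ} (hφ : HasSum (fun n => φ n ^ 2) a) (k : ℤ) :
    HasSum (fun n => φ (k - n) ^ 2) a :=
  (Equiv.subLeft k).hasSum_iff.2 hφ

/-! ### Exponential bounds -/

lemma summable_exp_neg_mul_abs {a : ℝ} (ha : 0 < a) :
    Summable fun n : ℤ => rexp (-a * |(n : ℝ)|) := by
  have h : Summable fun n : ℕ => rexp (n * -a) := Real.summable_exp_nat_mul_iff.2 (by linarith)
  apply Summable.of_nat_of_neg <;> exact h.congr fun n => by simp [mul_comm]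

lemma eventually_mul_exp_lt_mul_exp {A a σ τ : ℝ} (ha : 0 < a) (hτσ : τ < σ) :
    ∀ᶠ x in atTop, A * rexp (-σ * x) < a * rexp (-τ * x) := by
  have hlim : Tendsto (fun x => A * rexp (-((σ - τ) * x))) atTop (𝓝 0) := by
    simpa using (Real.tendsto_exp_neg_atTop_nhds_zero.comp
      (tendsto_id.const_mul_atTop (sub_pos.2 hτσ))).const_mul A
  filter_upwards [hlim.eventually_lt_const ha] with x hx
  calc A * rexp (-σ * x) = A * rexp (-((σ - τ) * x)) * rexp (-τ * x) := by
        rw [mul_assoc, ← Real.exp_add]; ring_nf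
    _ < a * rexp (-τ * x) := by gcongr

lemma mul_exp_add_mul_exp_le {A B p q x : ℝ} (hA : 0 ≤ A) (hB : 0 ≤ B) (hx : 0 ≤ x) :
    A * rexp (-p * x) + B * rexp (-q * x) ≤ (A + B) * rexp (-min p q * x) := by
  rw [add_mul]
  gcongr
  · exact min_le_left p q
  · exact min_le_right p q

lemma exists_pow_floor_mul_le_exp {b ρ : ℝ} (hb : 1 ≤ b) (hρ : 0 < ρ) :
    ∃ η : ℝ, 0 < η ∧ η ≤ 1 ∧ ∀ x : ℝ, 0 ≤ x → b ^ ⌊η * x⌋₊ ≤ rexp (ρ * x) := by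
  have hlog : 0 ≤ Real.log b := Real.log_nonneg hb
  refine ⟨min 1 (ρ / (Real.log b + 1)), by positivity, min_le_left _ _, fun x hx => ?_⟩
  set η := min 1 (ρ / (Real.log b + 1))
  have hη : η * (Real.log b + 1) ≤ ρ := (le_div_iff₀ (by positivity)).1 (min_le_right _ _)
  have hη0 : 0 ≤ η := by positivity
  calc b ^ ⌊η * x⌋₊ = rexp (⌊η * x⌋₊ * Real.log b) := by
        rw [Real.exp_nat_mul, Real.exp_log (by linarith)]
    _ ≤ rexp (η * x * Real.log b) := by gcongr; exact Nat.floor_le (by positivity)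
    _ ≤ rexp (ρ * x) := by
        have hηlog : η * Real.log b ≤ ρ := by linarith
        exact Real.exp_le_exp.2 (by linarith [mul_le_mul_of_nonneg_right hηlog hx])

lemma abs_le_pow_mul_of_recurrence {u : ℕ → ℝ} {K D : ℝ} (hK : 0 ≤ K) (h0 : |u 0| ≤ D)
    (h1 : |u 1| ≤ D) (hrec : ∀ i, |u (i + 2)| ≤ K * |u (i + 1)| + |u i| + D) (i : ℕ) :
    |u i| ≤ (K + 2) ^ i * D := by
  have hD : 0 ≤ D := (abs_nonneg _).trans h0
  suffices h : |u i| ≤ (K + 2) ^ i * D ∧ |u (i + 1)| ≤ (K + 2) ^ i * D from h.1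
  induction i with
  | zero => simpa using ⟨h0, h1⟩
  | succ i ih =>
    have hD_le : D ≤ (K + 2) ^ i * D :=
      le_mul_of_one_le_left hD (one_le_pow₀ (by linarith))
    have hstep : (K + 2) ^ (i + 1) * D = K * ((K + 2) ^ i * D) + 2 * ((K + 2) ^ i * D) := by ring
    have hK_le : K * |u (i + 1)| ≤ K * ((K + 2) ^ i * D) := by gcongr; exact ih.2
    have hK_nonneg : 0 ≤ K * ((K + 2) ^ i * D) := by positivity
    exact ⟨by linarith [ih.2], by linarith [hrec i, ih.1]⟩

/-! ### Near-reflections of eigenfunctions -/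

/-- The Wronskian of two functions on `ℤ`, which is constant when both solve the same Schrödinger
eigenvalue equation and serves to compare two eigenfunctions of nearby operators. -/
def wronskian (φ ψ : ℤ → ℝ) (n : ℤ) : ℝ :=
  φ (n + 1) * ψ n - φ n * ψ (n + 1)

lemma wronskian_sub_wronskian_succ {g g' φ ψ : ℤ → ℝ} {E : ℝ} (hφ : IsEigenfunction g E φ)
    (hψ : IsEigenfunction g' E ψ) (n : ℤ) :
    wronskian φ ψ n - wronskian φ ψ (n + 1) =
      (g (n + 1) - g' (n + 1)) * (φ (n + 1) * ψ (n + 1)) := by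
  have eφ := hφ (n + 1)
  have eψ := hψ (n + 1)
  rw [add_sub_cancel_right] at eφ eψ
  simp only [wronskian]
  linear_combination φ (n + 1) * eψ - ψ (n + 1) * eφ

lemma tendsto_wronskian_cofinite {φ ψ : ℤ → ℝ} (hφ : Tendsto φ cofinite (𝓝 0))
    (hψ : Tendsto ψ cofinite (𝓝 0)) : Tendsto (wronskian φ ψ) cofinite (𝓝 0) := by
  have hshift : Tendsto (fun n : ℤ => n + 1) cofinite cofinite :=
    (add_left_injective 1).tendsto_cofinite
  have h := ((hφ.comp hshift).mul hψ).sub (hφ.mul (hψ.comp hshift))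
  rwa [mul_zero, sub_zero] at h

lemma abs_wronskian_le {g g' φ ψ : ℤ → ℝ} {E β : ℝ} (hφ : IsEigenfunction g E φ)
    (hψ : IsEigenfunction g' E ψ) (hg : ∀ n, |g n - g' n| ≤ β)
    (hφ1 : HasSum (fun n => φ n ^ 2) 1) (hψ1 : HasSum (fun n => ψ n ^ 2) 1) (n : ℤ) :
    |wronskian φ ψ n| ≤ β := by
  have hβ : 0 ≤ β := (abs_nonneg _).trans (hg 0)
  set d : ℤ → ℝ := fun m => β * ((φ m ^ 2 + ψ m ^ 2) / 2)
  have hd : HasSum d β := by simpa [d] using ((hφ1.add hψ1).div_const 2).mul_left β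
  have hinj : Function.Injective fun i : ℕ => n + i + 1 := fun a b h => by simpa using h
  have hinj' : Function.Injective fun i : ℕ => n + (i : ℤ) := fun a b h => by simpa using h
  have hlim : Tendsto (fun i : ℕ => wronskian φ ψ (n + i)) atTop (𝓝 0) :=
    (tendsto_wronskian_cofinite (tendsto_cofinite_zero_of_summable_sq hφ1.summable)
      (tendsto_cofinite_zero_of_summable_sq hψ1.summable)).comp
      (Nat.cofinite_eq_atTop ▸ hinj'.tendsto_cofinite)
  have hstep (i : ℕ) :
      dist (wronskian φ ψ (n + i)) (wronskian φ ψ (n + i.succ)) ≤ d (n + i + 1) := by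
    rw [Nat.cast_succ, ← add_assoc, Real.dist_eq, wronskian_sub_wronskian_succ hφ hψ, abs_mul]
    exact mul_le_mul (hg _) (abs_mul_le_half_sq_add_sq _ _) (abs_nonneg _) hβ
  calc |wronskian φ ψ n| = dist (wronskian φ ψ (n + (0 : ℕ))) 0 := by simp
    _ ≤ ∑' i : ℕ, d (n + i + 1) :=
        dist_le_tsum_of_dist_le_of_tendsto₀ _ hstep (hd.summable.comp_injective hinj) hlim
    _ ≤ ∑' m, d m := tsum_comp_le_tsum_of_inj hd.summable (fun m => by positivity) hinj
    _ = β := hd.tsum_eq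

lemma abs_le_sqrt_or_abs_le_sqrt {x y β : ℝ} (hxy : |x * y| ≤ β) : |x| ≤ √β ∨ |y| ≤ √β := by
  by_contra! h
  have hβ : √β * √β = β := Real.mul_self_sqrt ((abs_nonneg _).trans hxy)
  rw [abs_mul] at hxy
  linarith [mul_lt_mul'' h.1 h.2 (Real.sqrt_nonneg β) (Real.sqrt_nonneg β)]

/-- `z, x, y` are the values of an eigenfunction at `t - 1, t, t + 1` for a reflection fixing the
site `t`; the signs `σ = 1` and `σ = -1` say that it is nearly even and nearly odd about `t`. -/
lemma exists_sign_of_site_centred {x y z e K β : ℝ} (he : |e| ≤ K) (hxyz : y + z = e * x)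
    (hβ : |x * (y - z)| ≤ β) :
    ∃ σ : ℝ, |σ| = 1 ∧ |x - σ * x| ≤ (K + 2) * √β ∧ |y - σ * z| ≤ (K + 2) * √β := by
  have hK : 0 ≤ K := (abs_nonneg _).trans he
  have hsqrt : 0 ≤ √β := Real.sqrt_nonneg β
  have hK_sqrt : 0 ≤ K * √β := by positivity
  rcases abs_le_sqrt_or_abs_le_sqrt hβ with hx | hyz
  · refine ⟨-1, by norm_num, ?_, ?_⟩
    · rw [show x - -1 * x = 2 * x by ring, abs_mul, abs_two]
      linarith
    · rw [neg_one_mul, sub_neg_eq_add, hxyz, abs_mul]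
      linarith [mul_le_mul he hx (abs_nonneg x) hK]
  · refine ⟨1, abs_one, ?_, ?_⟩
    · rw [one_mul, sub_self, abs_zero]
      positivity
    · rw [one_mul]
      linarith

/-- `x, y` are the values at `t, t + 1` for a reflection exchanging these two sites. -/
lemma exists_sign_of_bond_centred {x y β : ℝ} (hβ : |(y + x) * (y - x)| ≤ β) :
    ∃ σ : ℝ, |σ| = 1 ∧ |x - σ * y| ≤ √β ∧ |y - σ * x| ≤ √β := by
  rcases abs_le_sqrt_or_abs_le_sqrt hβ with h | h
  · exact ⟨-1, by norm_num, by rwa [neg_one_mul, sub_neg_eq_add, add_comm],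
      by rwa [neg_one_mul, sub_neg_eq_add]⟩
  · exact ⟨1, abs_one, by rwa [one_mul, abs_sub_comm], by rwa [one_mul]⟩

namespace IsEigenfunction

variable {g φ : ℤ → ℝ} {E : ℝ}

lemma reflect (hφ : IsEigenfunction g E φ) (k : ℤ) :
    IsEigenfunction (fun n => g (k - n)) E (fun n => φ (k - n)) := by
  intro n
  have h := hφ (k - n)
  rw [show k - n + 1 = k - (n - 1) by ring, show k - n - 1 = k - (n + 1) by ring] at h
  linarith

lemma abs_eigenvalue_le (hφ : IsEigenfunction g E φ) (hφ1 : HasSum (fun n => φ n ^ 2) 1) {G : ℝ}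
    (hG : ∀ n, |g n| ≤ G) : |E| ≤ G + 2 := by
  have hnext : HasSum (fun n => φ (n + 1) ^ 2) 1 :=
    (Equiv.addRight (1 : ℤ)).hasSum_iff (f := fun n => φ n ^ 2) |>.2 hφ1
  have hprev : HasSum (fun n => φ (n - 1) ^ 2) 1 :=
    (Equiv.subRight (1 : ℤ)).hasSum_iff (f := fun n => φ n ^ 2) |>.2 hφ1
  have hmajorant := (((hφ1.add hnext).div_const 2).add ((hφ1.add hprev).div_const 2)).add
    (hφ1.mul_left G)
  have hpointwise (n : ℤ) : |E| * φ n ^ 2 ≤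
      (φ n ^ 2 + φ (n + 1) ^ 2) / 2 + (φ n ^ 2 + φ (n - 1) ^ 2) / 2 + G * φ n ^ 2 :=
    calc |E| * φ n ^ 2 = |E * φ n ^ 2| := by rw [abs_mul, abs_sq]
      _ = |φ n * φ (n + 1) + φ n * φ (n - 1) + g n * φ n ^ 2| := by
          congr 1; linear_combination -φ n * hφ n
      _ ≤ |φ n * φ (n + 1)| + |φ n * φ (n - 1)| + |g n * φ n ^ 2| := abs_add_three _ _ _
      _ ≤ _ := by
          rw [abs_mul (g n), abs_sq]
          gcongr
          · exact abs_mul_le_half_sq_add_sq _ _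
          · exact abs_mul_le_half_sq_add_sq _ _
          · exact hG n
  linarith [hasSum_le hpointwise (hφ1.mul_left |E|) hmajorant]

lemma exists_sign_abs_sub_reflect_le (hφ : IsEigenfunction g E φ) {k : ℤ} {K β : ℝ}
    (hK : ∀ n, |E - g n| ≤ K) (hW : |wronskian φ (fun n => φ (k - n)) (k / 2)| ≤ β) :
    ∃ σ : ℝ, |σ| = 1 ∧ |φ (k / 2) - σ * φ (k - k / 2)| ≤ (K + 2) * √β ∧
      |φ (k / 2 + 1) - σ * φ (k - (k / 2 + 1))| ≤ (K + 2) * √β := by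
  rw [wronskian] at hW
  rcases Int.even_or_odd' k with ⟨t, rfl | rfl⟩
  · rw [show 2 * t / 2 = t by omega, show 2 * t - t = t by ring,
      show 2 * t - (t + 1) = t - 1 by ring] at hW ⊢
    refine exists_sign_of_site_centred (hK t) (by linarith [hφ t]) (le_of_eq_of_le ?_ hW)
    ring_nf
  · rw [show (2 * t + 1) / 2 = t by omega, show 2 * t + 1 - t = t + 1 by ring,
      show 2 * t + 1 - (t + 1) = t by ring] at hW ⊢
    have hK0 : 0 ≤ K := (abs_nonneg _).trans (hK 0)
    have hle : √β ≤ (K + 2) * √β := le_mul_of_one_le_left (Real.sqrt_nonneg β) (by linarith)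
    obtain ⟨σ, hσ, h0, h1⟩ := exists_sign_of_bond_centred (x := φ t) (y := φ (t + 1)) (β := β)
      (le_of_eq_of_le (by ring_nf) hW)
    exact ⟨σ, hσ, h0.trans hle, h1.trans hle⟩

lemma abs_sub_mul_succ_le {g' ψ : ℤ → ℝ} {σ K : ℝ} {n : ℤ} (hφ : IsEigenfunction g E φ)
    (hψ : IsEigenfunction g' E ψ) (hσ : |σ| = 1) (hK : |E - g n| ≤ K) :
    |φ (n + 1) - σ * ψ (n + 1)| ≤
      K * |φ n - σ * ψ n| + |φ (n - 1) - σ * ψ (n - 1)| + |g' n - g n| * |ψ n| :=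
  calc |φ (n + 1) - σ * ψ (n + 1)|
      = |(E - g n) * (φ n - σ * ψ n) + -(φ (n - 1) - σ * ψ (n - 1)) +
          σ * ((g' n - g n) * ψ n)| := by
        congr 1; linear_combination hφ n - σ * hψ n
    _ ≤ |E - g n| * |φ n - σ * ψ n| + |φ (n - 1) - σ * ψ (n - 1)| + |g' n - g n| * |ψ n| := by
        refine (abs_add_three _ _ _).trans_eq ?_
        rw [abs_neg, abs_mul, abs_mul σ, hσ, one_mul, abs_mul]
    _ ≤ K * |φ n - σ * ψ n| + |φ (n - 1) - σ * ψ (n - 1)| + |g' n - g n| * |ψ n| := by gcongr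

lemma abs_le_abs_reflect_add (hφ : IsEigenfunction g E φ) (hφ1 : HasSum (fun n => φ n ^ 2) 1)
    {k : ℤ} {K β : ℝ} (hK : ∀ n, |E - g n| ≤ K) (hg : ∀ n, |g (k - n) - g n| ≤ β) (i : ℕ) :
    |φ (k / 2 + i)| ≤ |φ (k - (k / 2 + i))| + (K + 2) ^ i * ((K + 2) * √β + β) := by
  have hK0 : 0 ≤ K := (abs_nonneg _).trans (hK 0)
  have hβ : 0 ≤ β := (abs_nonneg _).trans (hg 0)
  obtain ⟨σ, hσ, h0, h1⟩ := hφ.exists_sign_abs_sub_reflect_le hK <|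
    abs_wronskian_le hφ (hφ.reflect k) (fun n => abs_sub_comm (g n) _ ▸ hg n) hφ1
      (hasSum_sq_reflect hφ1 k) (k / 2)
  set ψ : ℤ → ℝ := fun n => φ (k - n)
  set u : ℤ → ℝ := fun n => φ n - σ * ψ n
  have hrec (n : ℤ) : |u (n + 1)| ≤ K * |u n| + |u (n - 1)| + ((K + 2) * √β + β) := by
    have hψ_le : |g (k - n) - g n| * |ψ n| ≤ β :=
      (mul_le_of_le_one_right (abs_nonneg _) (abs_le_one_of_hasSum_sq hφ1 _)).trans (hg n)
    have hsqrt : 0 ≤ (K + 2) * √β := by positivity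
    linarith [hφ.abs_sub_mul_succ_le (hφ.reflect k) hσ (hK n)]
  have hgrowth := abs_le_pow_mul_of_recurrence (u := fun i : ℕ => u (k / 2 + i)) hK0
    (D := (K + 2) * √β + β) (by simpa using h0.trans (le_add_of_nonneg_right hβ))
    (by simpa using h1.trans (le_add_of_nonneg_right hβ))
    (fun i => by
      have h := hrec (k / 2 + (i + 1 : ℕ))
      rwa [show k / 2 + ((i + 1 : ℕ) : ℤ) + 1 = k / 2 + (i + 2 : ℕ) by push_cast; ring,
        show k / 2 + ((i + 1 : ℕ) : ℤ) - 1 = k / 2 + i by push_cast; ring] at h) i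
  have htriangle := abs_add_le (σ * ψ (k / 2 + i)) (u (k / 2 + i))
  rw [add_sub_cancel, abs_mul, hσ, one_mul] at htriangle
  linarith

lemma sq_le_abs_mul_reflect_add (hφ : IsEigenfunction g E φ) (hφ1 : HasSum (fun n => φ n ^ 2) 1)
    {k : ℤ} {K β : ℝ} (hK : ∀ n, |E - g n| ≤ K) (hg : ∀ n, |g (k - n) - g n| ≤ β) (i : ℕ) :
    φ (k / 2 + i) ^ 2 ≤
      |φ (k / 2 + i) * φ (k - (k / 2 + i))| + (K + 2) ^ i * ((K + 2) * √β + β) := by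
  have hK0 : 0 ≤ K := (abs_nonneg _).trans (hK 0)
  have hβ : 0 ≤ β := (abs_nonneg _).trans (hg 0)
  have herror : 0 ≤ (K + 2) ^ i * ((K + 2) * √β + β) := by positivity
  have hreflect := hφ.abs_le_abs_reflect_add hφ1 hK hg i
  set j := k / 2 + (i : ℤ)
  calc φ j ^ 2 = |φ j| * |φ j| := by rw [abs_mul_abs_self, sq]
    _ ≤ |φ j| * |φ (k - j)| + |φ j| * ((K + 2) ^ i * ((K + 2) * √β + β)) := by
        rw [← mul_add]; gcongr
    _ ≤ |φ j * φ (k - j)| + (K + 2) ^ i * ((K + 2) * √β + β) := by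
        rw [abs_mul]
        exact add_le_add_right
          (mul_le_of_le_one_left herror (abs_le_one_of_hasSum_sq hφ1 j)) _

end IsEigenfunction

/-! ### Semi-uniform decay -/

/-- Semi-uniform exponential decay, at rate `γ`, of the kernels `f s j * f s n` of the projections
onto a family of functions on `ℤ`. In contrast with `HasSULE` it makes no reference to localization
centres. -/
def SemiuniformKernelDecay {ι : Type*} (f : ι → ℤ → ℝ) (γ : ℝ) : Prop :=
  ∀ ε : ℝ, 0 < ε → ∃ C : ℝ, 0 < C ∧ ∀ s (j n : ℤ),
    |f s j * f s n| ≤ C * rexp (ε * |(j : ℝ)| - γ * |(j : ℝ) - n|)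

section Decay

variable {ι : Type*} {f : ι → ℤ → ℝ} {γ : ℝ}

lemma localization_exponent_le {ε γ a j n : ℝ} (hε : 0 ≤ ε) (hεγ : ε ≤ γ / 2) :
    ε * |a| - γ * |j - a| - γ * |n - a| ≤ ε * |j| - γ / 2 * |j - n| := by
  have ha : |a| ≤ |j| + |j - a| := by simpa using abs_sub j (j - a)
  have hjn : |j - n| ≤ |j - a| + |n - a| := abs_sub_comm n a ▸ abs_sub_le j a n
  have hε_a := mul_le_mul_of_nonneg_left ha hε
  have hγ_jn := mul_le_mul_of_nonneg_left hjn (hε.trans hεγ)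
  have hεγ_ja := mul_le_mul_of_nonneg_right hεγ (abs_nonneg (j - a))
  have hγ_na := mul_nonneg (hε.trans hεγ) (abs_nonneg (n - a))
  linarith

lemma semiuniformKernelDecay_of_localized {c : ι → ℤ} (hγ : 0 < γ)
    (hf : ∀ ε : ℝ, 0 < ε → ∃ C : ℝ, ∀ s (n : ℤ),
      |f s n| ≤ C * rexp (ε * |(c s : ℝ)|) * rexp (-γ * |(n : ℝ) - c s|)) :
    SemiuniformKernelDecay f (γ / 2) := by
  intro ε hε
  set ε' := min ε (γ / 2)
  have hε' : 0 < ε' := by positivity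
  obtain ⟨C, hC⟩ := hf (ε' / 2) (half_pos hε')
  refine ⟨C ^ 2 + 1, by positivity, fun s j n => ?_⟩
  have hexp : ε' * |(c s : ℝ)| - γ * |(j : ℝ) - c s| - γ * |(n : ℝ) - c s| ≤
      ε * |(j : ℝ)| - γ / 2 * |(j : ℝ) - n| :=
    (localization_exponent_le hε'.le (min_le_right _ _)).trans (by gcongr; exact min_le_left _ _)
  calc |f s j * f s n|
      ≤ (C * rexp (ε' / 2 * |(c s : ℝ)|) * rexp (-γ * |(j : ℝ) - c s|)) *
        (C * rexp (ε' / 2 * |(c s : ℝ)|) * rexp (-γ * |(n : ℝ) - c s|)) := by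
        rw [abs_mul]
        exact mul_le_mul (hC s j) (hC s n) (abs_nonneg _) ((abs_nonneg _).trans (hC s j))
    _ = C ^ 2 * rexp (ε' * |(c s : ℝ)| - γ * |(j : ℝ) - c s| - γ * |(n : ℝ) - c s|) := by
        rw [show ε' * |(c s : ℝ)| - γ * |(j : ℝ) - c s| - γ * |(n : ℝ) - c s| =
          ε' / 2 * |(c s : ℝ)| + -γ * |(j : ℝ) - c s| +
            (ε' / 2 * |(c s : ℝ)| + -γ * |(n : ℝ) - c s|) by ring]
        simp only [Real.exp_add]
        ring
    _ ≤ (C ^ 2 + 1) * rexp (ε * |(j : ℝ)| - γ / 2 * |(j : ℝ) - n|) := by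
        gcongr
        linarith

lemma SemiuniformKernelDecay.exists_mul_exp_le_abs [Nonempty ι]
    (hdecay : SemiuniformKernelDecay f γ) (hγ : 0 < γ)
    (hrow : ∀ s, HasSum (fun n => f s n ^ 2) 1) (hcol : ∀ n, HasSum (fun s => f s n ^ 2) 1)
    {ε : ℝ} (hε : 0 < ε) :
    ∃ a : ℝ, 0 < a ∧ ∀ j : ℤ, ∃ s, a * rexp (-ε * |(j : ℝ)|) ≤ |f s j| := by
  obtain ⟨C, hC, hfC⟩ := hdecay ε hε
  have hsum := summable_exp_neg_mul_abs (half_pos hγ)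
  set S := ∑' n : ℤ, rexp (-(γ / 2) * |(n : ℝ)|)
  have hS : 0 < S := hsum.tsum_pos (fun n => (Real.exp_pos _).le) 0 (Real.exp_pos _)
  set q := 1 / (2 * S)
  have hq : 0 < q := by positivity
  refine ⟨q ^ 2 / C, by positivity, fun j => ?_⟩
  by_contra! hsmall
  -- The smallness of `f s j` and the decay of the kernel are interpolated by a geometric mean.
  have hmajorant (s : ι) (n : ℤ) :
      |f s j * f s n| ≤ q * rexp (-(γ / 2) * |((j - n : ℤ) : ℝ)|) := by
    refine abs_le_of_sq_le_sq ?_ (by positivity)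
    calc (f s j * f s n) ^ 2 = |f s j * f s n| * |f s j * f s n| := by rw [← sq_abs, sq]
      _ ≤ |f s j| * (C * rexp (ε * |(j : ℝ)| - γ * |(j : ℝ) - n|)) := by
          refine mul_le_mul ?_ (hfC s j n) (abs_nonneg _) (abs_nonneg _)
          rw [abs_mul]
          exact mul_le_of_le_one_right (abs_nonneg _) (abs_le_one_of_hasSum_sq (hrow s) n)
      _ ≤ q ^ 2 / C * rexp (-ε * |(j : ℝ)|) *
            (C * rexp (ε * |(j : ℝ)| - γ * |(j : ℝ) - n|)) := by
          gcongr; exact (hsmall s).le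
      _ = q ^ 2 * (rexp (-ε * |(j : ℝ)|) * rexp (ε * |(j : ℝ)| - γ * |(j : ℝ) - n|)) := by
          field_simp
      _ = (q * rexp (-(γ / 2) * |((j - n : ℤ) : ℝ)|)) ^ 2 := by
          rw [mul_pow, ← Real.exp_add, ← Real.exp_nat_mul]
          push_cast
          ring_nf
  have hone := one_le_of_abs_mul_le hrow hcol
    (((Equiv.subLeft j).hasSum_iff.2 hsum.hasSum).mul_left q) hmajorant
  have hqS : q * S = 1 / 2 := by simp only [q]; field_simp
  linarith

end Decay

/-! ### Absence of SULE -/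

lemma abs_ediv_two_add_floor_le (k : ℤ) {η : ℝ} (hη0 : 0 ≤ η) (hη1 : η ≤ 1) :
    |((k / 2 + ⌊η * |(k : ℝ)|⌋₊ : ℤ) : ℝ)| ≤ 2 * |(k : ℝ)| := by
  have hhalf : |((k / 2 : ℤ) : ℝ)| ≤ |(k : ℝ)| := by
    exact_mod_cast abs_le.2 (by rcases abs_cases k with h | h <;> omega)
  have hfloor : (⌊η * |(k : ℝ)|⌋₊ : ℝ) ≤ |(k : ℝ)| :=
    (Nat.floor_le (by positivity)).trans (mul_le_of_le_one_left (abs_nonneg _) hη1)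
  push_cast
  have htriangle := abs_add_le ((k / 2 : ℤ) : ℝ) (⌊η * |(k : ℝ)|⌋₊ : ℝ)
  rw [Nat.abs_cast] at htriangle
  linarith

lemma two_mul_sub_three_le_abs_sub_reflect (k : ℤ) (y : ℝ) :
    2 * y - 3 ≤ |((k / 2 + ⌊y⌋₊ : ℤ) : ℝ) - ((k - (k / 2 + ⌊y⌋₊) : ℤ) : ℝ)| := by
  have hfloor : y < ⌊y⌋₊ + 1 := Nat.lt_floor_add_one y
  have hdiff : 2 * (⌊y⌋₊ : ℝ) - 1 ≤
      ((k / 2 + ⌊y⌋₊ : ℤ) : ℝ) - ((k - (k / 2 + ⌊y⌋₊) : ℤ) : ℝ) := by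
    have h : 2 * (⌊y⌋₊ : ℤ) - 1 ≤ (k / 2 + ⌊y⌋₊) - (k - (k / 2 + ⌊y⌋₊)) := by omega
    exact_mod_cast h
  linarith [le_abs_self (((k / 2 + ⌊y⌋₊ : ℤ) : ℝ) - ((k - (k / 2 + ⌊y⌋₊) : ℤ) : ℝ))]

lemma sqrt_mul_exp_add_le {C c x b : ℝ} (hc : 0 ≤ c) (hx : 0 ≤ x) :
    b * √(C * rexp (-c * x)) + C * rexp (-c * x) ≤ (b * √C + |C|) * rexp (-(c / 2) * x) := by
  have hsqrt : √(C * rexp (-c * x)) = √C * rexp (-(c / 2) * x) := by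
    rw [Real.sqrt_mul' _ (Real.exp_pos _).le, ← Real.exp_half]
    ring_nf
  have hcx : 0 ≤ c * x := mul_nonneg hc hx
  have hexp : C * rexp (-c * x) ≤ |C| * rexp (-(c / 2) * x) :=
    mul_le_mul (le_abs_self C) (Real.exp_le_exp.2 (by linarith)) (Real.exp_pos _).le (abs_nonneg C)
  rw [hsqrt, add_mul, mul_assoc]
  gcongr

lemma pow_mul_sqrt_mul_exp_add_le {C c x b : ℝ} {i : ℕ} (hb : 0 ≤ b) (hc : 0 ≤ c) (hx : 0 ≤ x)
    (hbi : b ^ i ≤ rexp (c / 4 * x)) :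
    b ^ i * (b * √(C * rexp (-c * x)) + C * rexp (-c * x)) ≤
      (b * √C + |C|) * rexp (-(c / 4) * x) :=
  calc b ^ i * (b * √(C * rexp (-c * x)) + C * rexp (-c * x))
      ≤ b ^ i * ((b * √C + |C|) * rexp (-(c / 2) * x)) := by
        gcongr
        exact sqrt_mul_exp_add_le hc hx
    _ ≤ rexp (c / 4 * x) * ((b * √C + |C|) * rexp (-(c / 2) * x)) := by gcongr
    _ = (b * √C + |C|) * rexp (-(c / 4) * x) := by
        rw [mul_left_comm, ← Real.exp_add]
        ring_nf

lemma exists_site_sq_le_exp {ι : Type*} {f : ι → ℤ → ℝ} {g : ℤ → ℝ} {γ G C c : ℝ}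
    (hdecay : SemiuniformKernelDecay f γ) (hγ : 0 < γ) (heig : ∀ s, ∃ E, IsEigenfunction g E (f s))
    (hf : ∀ s, HasSum (fun n => f s n ^ 2) 1) (hG : ∀ n, |g n| ≤ G) (hc : 0 < c) :
    ∃ A σ : ℝ, 0 < σ ∧ ∀ k : ℤ, (∀ n, |g (k - n) - g n| ≤ C * rexp (-c * |(k : ℝ)|)) →
      ∃ j : ℤ, |(j : ℝ)| ≤ 2 * |(k : ℝ)| ∧ ∀ s, f s j ^ 2 ≤ A * rexp (-σ * |(k : ℝ)|) := by
  have hG0 : 0 ≤ G := (abs_nonneg _).trans (hG 0)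
  set b := 2 * G + 2 + 2
  obtain ⟨η, hη0, hη1, hpow⟩ :=
    exists_pow_floor_mul_le_exp (show 1 ≤ b by linarith) (show 0 < c / 4 by positivity)
  obtain ⟨C', hC', hkernel⟩ := hdecay (γ * η / 2) (by positivity)
  set D := b * √C + |C|
  refine ⟨C' * rexp (3 * γ) + D, min (γ * η) (c / 4), by positivity, fun k hk =>
    ⟨k / 2 + ⌊η * |(k : ℝ)|⌋₊, abs_ediv_two_add_floor_le k hη0.le hη1, fun s => ?_⟩⟩
  obtain ⟨E, hE⟩ := heig s
  have hK (n : ℤ) : |E - g n| ≤ 2 * G + 2 :=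
    (abs_sub _ _).trans (by linarith [hE.abs_eigenvalue_le (hf s) hG, hG n])
  have hsq := hE.sq_le_abs_mul_reflect_add (hf s) hK hk ⌊η * |(k : ℝ)|⌋₊
  have hj := abs_ediv_two_add_floor_le k hη0.le hη1
  have hdist := two_mul_sub_three_le_abs_sub_reflect k (η * |(k : ℝ)|)
  set x := |(k : ℝ)|
  set i := ⌊η * x⌋₊
  set j : ℤ := k / 2 + i
  have hx : 0 ≤ x := abs_nonneg _
  have hker : |f s j * f s (k - j)| ≤ C' * rexp (3 * γ) * rexp (-(γ * η) * x) := by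
    refine (hkernel s j (k - j)).trans ?_
    rw [mul_assoc, ← Real.exp_add]
    gcongr
    have hj_le := mul_le_mul_of_nonneg_left hj (show 0 ≤ γ * η / 2 by positivity)
    have hdist_le := mul_le_mul_of_nonneg_left hdist hγ.le
    linarith
  have herror := pow_mul_sqrt_mul_exp_add_le (C := C) (show 0 ≤ b by linarith) hc.le hx (hpow x hx)
  calc f s j ^ 2 ≤ C' * rexp (3 * γ) * rexp (-(γ * η) * x) + D * rexp (-(c / 4) * x) :=
        hsq.trans (add_le_add hker herror)
    _ ≤ (C' * rexp (3 * γ) + D) * rexp (-min (γ * η) (c / 4) * x) :=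
        mul_exp_add_mul_exp_le (by positivity) (by positivity) hx

theorem no_SULE_quasiperiodic_even_holder_general {g : ℤ → ℝ} {G C c : ℝ} (hG : ∀ n, |g n| ≤ G)
    (hc : 0 < c)
    (hreflect : ∃ᶠ k : ℤ in cofinite, ∀ n, |g (k - n) - g n| ≤ C * rexp (-c * |(k : ℝ)|)) :
    ¬ HasSULE g := by
  rintro ⟨Φ, centre, γ, hγ, heig, hlocalized⟩
  have hrow := hasSum_sq_of_orthonormal Φ.orthonormal
  have hdecay := semiuniformKernelDecay_of_localized hγ hlocalized
  obtain ⟨A, σ, hσ, hupper⟩ := exists_site_sq_le_exp (C := C) hdecay (half_pos hγ) heig hrow hG hc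
  obtain ⟨a, ha, hlower⟩ := hdecay.exists_mul_exp_le_abs (half_pos hγ) hrow
    (hasSum_sq_apply_of_hilbertBasis Φ) (ε := σ / 8) (by positivity)
  have habs : Tendsto (fun k : ℤ => |(k : ℝ)|) cofinite atTop :=
    cocompact_eq_cofinite ℤ ▸ tendsto_norm_cocompact_atTop
  obtain ⟨k, hk, hlt⟩ := (hreflect.and_eventually (habs.eventually
    (eventually_mul_exp_lt_mul_exp (A := A) (pow_pos ha 2) (half_lt_self hσ)))).exists
  obtain ⟨j, hjk, hj⟩ := hupper k hk
  obtain ⟨s, hs⟩ := hlower j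
  refine hlt.not_ge ?_
  calc a ^ 2 * rexp (-(σ / 2) * |(k : ℝ)|)
      = (a * rexp (-(σ / 8) * (2 * |(k : ℝ)|))) ^ 2 := by
        rw [mul_pow, ← Real.exp_nat_mul]; push_cast; ring_nf
    _ ≤ (a * rexp (-(σ / 8) * |(j : ℝ)|)) ^ 2 := by
        have hexp : -(σ / 8) * (2 * |(k : ℝ)|) ≤ -(σ / 8) * |(j : ℝ)| :=
          mul_le_mul_of_nonpos_left hjk (by linarith)
        gcongr
    _ ≤ |Φ s j| ^ 2 := by gcongr
    _ = Φ s j ^ 2 := sq_abs _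
    _ ≤ A * rexp (-σ * |(k : ℝ)|) := hj s

/-! ### Even quasiperiodic potentials -/

lemma distToInt_nonneg (x : ℝ) : 0 ≤ distToInt x := abs_nonneg _

lemma log_distToInt_nonpos (x : ℝ) : Real.log (distToInt x) ≤ 0 :=
  Real.log_nonpos (distToInt_nonneg x) ((abs_sub_round x).trans (by norm_num))

lemma frequently_distToInt_le_exp {α θ a : ℝ} (ha : a < deltaPhase α θ) :
    ∃ᶠ k : ℤ in cofinite, distToInt (2 * θ + k * α) ≤ rexp (-a * |(k : ℝ)|) := by
  have hbdd : IsCoboundedUnder (· ≤ ·) cofinite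
      fun n : ℤ => -Real.log (distToInt (2 * θ + n * α)) / |(n : ℝ)| :=
    IsBoundedUnder.isCoboundedUnder_le <| isBoundedUnder_of ⟨0, fun n =>
      div_nonneg (neg_nonneg.2 (log_distToInt_nonpos _)) (abs_nonneg _)⟩
  refine ((frequently_lt_of_lt_limsup hbdd ha).and_eventually
    (eventually_cofinite_ne 0)).mono fun k ⟨hlog, hk⟩ => ?_
  have hk' : 0 < |(k : ℝ)| := abs_pos.2 (Int.cast_ne_zero.2 hk)
  rw [lt_div_iff₀ hk'] at hlog
  rcases (distToInt_nonneg (2 * θ + k * α)).eq_or_lt with h | h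
  · rw [← h]; positivity
  · rw [← Real.log_le_iff_le_exp h]; linarith

section Potential

variable {v : ℝ → ℝ} {Cv r : ℝ}

lemma abs_le_of_periodic_of_holder (hper : Function.Periodic v 1) (hr : 0 ≤ r)
    (hCv : 0 ≤ Cv) (hHolder : ∀ x y : ℝ, |v x - v y| ≤ Cv * |x - y| ^ r) (x : ℝ) :
    |v x| ≤ Cv + |v 0| := by
  have hfract : v (Int.fract x) = v x := by
    rw [Int.fract, ← mul_one (⌊x⌋ : ℝ), hper.sub_int_mul_eq]
  calc |v x| ≤ |v (Int.fract x) - v 0| + |v 0| := by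
        rw [← hfract]; simpa using abs_add_le (v (Int.fract x) - v 0) (v 0)
    _ ≤ Cv * |Int.fract x - 0| ^ r + |v 0| := by gcongr; exact hHolder _ _
    _ ≤ Cv + |v 0| := by
        rw [sub_zero, Int.abs_fract]
        gcongr
        exact mul_le_of_le_one_right hCv
          (Real.rpow_le_one (Int.fract_nonneg x) (Int.fract_lt_one x).le hr)

lemma abs_sub_le_distToInt_add_rpow (hper : Function.Periodic v 1) (heven : Function.Even v)
    (hHolder : ∀ x y : ℝ, |v x - v y| ≤ Cv * |x - y| ^ r) (x y : ℝ) :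
    |v x - v y| ≤ Cv * distToInt (x + y) ^ r := by
  have hy : v (round (x + y) - y) = v y := by
    rw [← mul_one (round (x + y) : ℝ), hper.int_mul_sub_eq, heven]
  have h := hHolder x (round (x + y) - y)
  rwa [hy, show x - (round (x + y) - y) = x + y - round (x + y) by ring] at h

lemma frequently_abs_quasiperiodic_reflect_sub_le (hper : Function.Periodic v 1)
    (heven : Function.Even v) (hCv : 0 ≤ Cv) (hr : 0 ≤ r)
    (hHolder : ∀ x y : ℝ, |v x - v y| ≤ Cv * |x - y| ^ r) {α θ a : ℝ}
    (ha : a < deltaPhase α θ) :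
    ∃ᶠ k : ℤ in cofinite, ∀ n : ℤ, |v (θ + ((k - n : ℤ) : ℝ) * α) - v (θ + n * α)| ≤
      Cv * rexp (-(a * r) * |(k : ℝ)|) := by
  refine (frequently_distToInt_le_exp ha).mono fun k hk n => ?_
  calc |v (θ + ((k - n : ℤ) : ℝ) * α) - v (θ + n * α)|
      ≤ Cv * distToInt (θ + ((k - n : ℤ) : ℝ) * α + (θ + n * α)) ^ r :=
        abs_sub_le_distToInt_add_rpow hper heven hHolder _ _
    _ = Cv * distToInt (2 * θ + k * α) ^ r := by push_cast; ring_nf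
    _ ≤ Cv * rexp (-a * |(k : ℝ)|) ^ r := by gcongr; exact distToInt_nonneg _
    _ = Cv * rexp (-(a * r) * |(k : ℝ)|) := by rw [← Real.exp_mul]; ring_nf

end Potential

theorem no_SULE_quasiperiodic_even_holder
    (v : ℝ → ℝ) (hper : ∀ x : ℝ, v (x + 1) = v x)
    (heven : ∀ x : ℝ, v (-x) = v x)
    (hHolder : ∃ Cv r : ℝ, 0 < Cv ∧ 0 < r ∧ ∀ x y : ℝ, |v x - v y| ≤ Cv * |x - y| ^ r)
    (α θ : ℝ) (hα : Irrational α)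
    (hδ : 0 < deltaPhase α θ) :
    ¬ HasSULE (fun n : ℤ => v (θ + n * α)) := by
  obtain ⟨Cv, r, hCv, hr, hv⟩ := hHolder
  exact no_SULE_quasiperiodic_even_holder_general
    (fun _ => abs_le_of_periodic_of_holder hper hr.le hCv.le hv _) (mul_pos (half_pos hδ) hr)
    (frequently_abs_quasiperiodic_reflect_sub_le hper heven hCv.le hr.le hv (half_lt_self hδ))
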